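/- arXiv:math/0305124 — 3 statements merged into one kernel-verified Lean document; each statement's English description precedes it below -/
import Mathlib

section
/- The GL(7,ℝ)-orbit of φ, namely the set { g*φ : g ∈ GL(7,ℝ) }, is an open subset of the (35-dimensional) vector space of alternating 3-forms on ℝ⁷. (Its elements are the definite 3-forms on ℝ⁷.) -/
open scoped BigOperators Matrix

noncomputable section

namespace G2

/-- The standard basis vector `e i` of `ℝ⁷`. -/
def e (i : Fin 7) : Fin 7 → ℝ := fun j => if j = i then 1 else 0

/-- The 3-form `e^a ∧ e^b ∧ e^c` (determinant convention), evaluated on `(x, y, z)`. -/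
def w3 (a b c : Fin 7) (x y z : Fin 7 → ℝ) : ℝ :=
  x a * (y b * z c - y c * z b) - x b * (y a * z c - y c * z a)
    + x c * (y a * z b - y b * z a)

/-- The 4-form `e^a ∧ e^b ∧ e^c ∧ e^d`, evaluated on `(x, y, z, w)`. -/
def w4 (a b c d : Fin 7) (x y z w : Fin 7 → ℝ) : ℝ :=
  Matrix.det !![x a, x b, x c, x d; y a, y b, y c, y d;
                z a, z b, z c, z d; w a, w b, w c, w d]

/-- The fundamental `G₂` 3-form
`φ = e^{123}+e^{145}+e^{167}+e^{246}-e^{257}-e^{347}-e^{356}` (indices shifted to start at 0),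
as a trilinear alternating function of three vectors. -/
def phi (x y z : Fin 7 → ℝ) : ℝ :=
  w3 0 1 2 x y z + w3 0 3 4 x y z + w3 0 5 6 x y z + w3 1 3 5 x y z
    - w3 1 4 6 x y z - w3 2 3 6 x y z - w3 2 4 5 x y z

/-- The 4-form `ψ = *φ = e^{4567}+e^{2367}+e^{2345}+e^{1357}-e^{1346}-e^{1256}-e^{1247}`
(indices shifted to start at 0), as a function of four vectors. -/
def psi (x y z w : Fin 7 → ℝ) : ℝ :=
  w4 3 4 5 6 x y z w + w4 1 2 5 6 x y z w + w4 1 2 3 4 x y z w + w4 0 2 4 6 x y z w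
    - w4 0 2 3 5 x y z w - w4 0 1 4 5 x y z w - w4 0 1 3 6 x y z w

/-- `ε_{ijk} = φ(e_i, e_j, e_k)`. -/
def eps (i j k : Fin 7) : ℝ := phi (e i) (e j) (e k)

/-- `ε_{ijkl} = ψ(e_i, e_j, e_k, e_l)`. -/
def eps4 (i j k l : Fin 7) : ℝ := psi (e i) (e j) (e k) (e l)

/-- The volume form `e^1 ∧ ⋯ ∧ e^7`, evaluated on a 7-tuple of vectors. -/
def vol (v : Fin 7 → (Fin 7 → ℝ)) : ℝ := Matrix.det (Matrix.of fun i j => v i j)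

/-- The matrix `[v]` with `[v]_{ij} = Σ_k ε_{ijk} v_k`. -/
def bracket (v : Fin 7 → ℝ) : Matrix (Fin 7) (Fin 7) ℝ :=
  Matrix.of fun i j => ∑ k : Fin 7, eps i j k * v k

/-- The vector `⟨A⟩` with `⟨A⟩_i = Σ_{j,k} ε_{ijk} A_{jk}`. -/
def angle (A : Matrix (Fin 7) (Fin 7) ℝ) : Fin 7 → ℝ :=
  fun i => ∑ j : Fin 7, ∑ k : Fin 7, eps i j k * A j k

/-- Wedge product of two 2-forms (determinant convention), evaluated on four vectors. -/
def wedge22 (A B : (Fin 7 → ℝ) → (Fin 7 → ℝ) → ℝ) (v : Fin 4 → (Fin 7 → ℝ)) : ℝ :=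
  (1 / 4 : ℝ) * ∑ σ : Equiv.Perm (Fin 4),
    ((Equiv.Perm.sign σ : ℤ) : ℝ) * (A (v (σ 0)) (v (σ 1)) * B (v (σ 2)) (v (σ 3)))

/-- Wedge product of three 2-forms (determinant convention), evaluated on six vectors. -/
def wedge222 (A B C : (Fin 7 → ℝ) → (Fin 7 → ℝ) → ℝ) (v : Fin 6 → (Fin 7 → ℝ)) : ℝ :=
  (1 / 8 : ℝ) * ∑ σ : Equiv.Perm (Fin 6),
    ((Equiv.Perm.sign σ : ℤ) : ℝ) *
      (A (v (σ 0)) (v (σ 1)) * B (v (σ 2)) (v (σ 3)) * C (v (σ 4)) (v (σ 5)))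

/-- Wedge product of two 2-forms and a 3-form (determinant convention),
evaluated on seven vectors. -/
def wedge223 (A B : (Fin 7 → ℝ) → (Fin 7 → ℝ) → ℝ)
    (C : (Fin 7 → ℝ) → (Fin 7 → ℝ) → (Fin 7 → ℝ) → ℝ)
    (v : Fin 7 → (Fin 7 → ℝ)) : ℝ :=
  (1 / 24 : ℝ) * ∑ σ : Equiv.Perm (Fin 7),
    ((Equiv.Perm.sign σ : ℤ) : ℝ) *
      (A (v (σ 0)) (v (σ 1)) * B (v (σ 2)) (v (σ 3)) * C (v (σ 4)) (v (σ 5)) (v (σ 6)))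

/-- The map `i_φ : S²(ℝ⁷)* → Λ³(ℝ⁷)*`,
`i_φ(h) = Σ_{i,j,k,l} ε_{ikl} h_{ij} e^j ∧ e^k ∧ e^l`, evaluated on `(x, y, z)`. -/
def iphi (h : Fin 7 → Fin 7 → ℝ) (x y z : Fin 7 → ℝ) : ℝ :=
  ∑ i : Fin 7, ∑ j : Fin 7, ∑ k : Fin 7, ∑ l : Fin 7, eps i k l * h i j * w3 j k l x y z

/-- The space of alternating 3-forms on `ℝ⁷`, described by their (totally antisymmetric)
coefficient tensors `T_{ijk} = γ(e_i,e_j,e_k)`; a 35-dimensional vector space, topologized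
as a subspace of all tensors. -/
def Alt3 : Type :=
  {T : Fin 7 → Fin 7 → Fin 7 → ℝ //
    ∀ i j k : Fin 7, T j i k = -(T i j k) ∧ T i k j = -(T i j k)}

instance : TopologicalSpace Alt3 :=
  inferInstanceAs (TopologicalSpace
    {T : Fin 7 → Fin 7 → Fin 7 → ℝ //
      ∀ i j k : Fin 7, T j i k = -(T i j k) ∧ T i k j = -(T i j k)})

abbrev Ten := Fin 7 → Fin 7 → Fin 7 → ℝ

abbrev Mat := Fin 7 → Fin 7 → ℝ

def IsAlt (T : Ten) : Prop :=
  ∀ i j k : Fin 7, T j i k = -(T i j k) ∧ T i k j = -(T i j k)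

/-- pullback of `phi` by the linear map with `e i ↦ m i`. -/
def FF (m : Mat) : Ten := fun i j k => phi (m i) (m j) (m k)

def pull (h : Mat) (T : Ten) : Ten := fun i j k =>
  ∑ a, h i a * ∑ b, h j b * ∑ c, h k c * T a b c

lemma e_eq (i : Fin 7) : e i = Pi.single i 1 := by
  ext j; simp [e, Pi.single_apply]

lemma phi_swap12 (x y z : Fin 7 → ℝ) : phi y x z = - phi x y z := by
  simp only [phi, w3]; ring

lemma phi_swap23 (x y z : Fin 7 → ℝ) : phi x z y = - phi x y z := by
  simp only [phi, w3]; ring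

lemma phi_exp3 (x y z : Fin 7 → ℝ) : phi x y z = ∑ c, z c * phi x y (e c) := by
  simp [phi, w3, e, Fin.sum_univ_seven]; ring

lemma phi_exp2 (x y z : Fin 7 → ℝ) : phi x y z = ∑ c, y c * phi x (e c) z := by
  rw [phi_swap23, phi_exp3, ← Finset.sum_neg_distrib]
  refine Finset.sum_congr rfl fun c _ => ?_
  rw [phi_swap23]; ring

lemma phi_exp1 (x y z : Fin 7 → ℝ) : phi x y z = ∑ c, x c * phi (e c) y z := by
  rw [phi_swap12, phi_exp2, ← Finset.sum_neg_distrib]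
  refine Finset.sum_congr rfl fun c _ => ?_
  rw [phi_swap12]; ring

lemma FF_alt (m : Mat) : IsAlt (FF m) := fun _ _ _ => ⟨phi_swap12 _ _ _, phi_swap23 _ _ _⟩

lemma FF_eq_pull (m : Mat) : FF m = pull m (FF e) := by
  ext i j k
  simp only [FF, pull]
  rw [phi_exp1]
  refine Finset.sum_congr rfl fun a _ => ?_
  rw [phi_exp2]
  congr 1
  refine Finset.sum_congr rfl fun b _ => ?_
  rw [phi_exp3]

def mm (h h' : Mat) : Mat := fun i a => ∑ b, h i b * h' b a

lemma sum_assoc (x : Fin 7 → ℝ) (h : Mat) (f : Fin 7 → ℝ) :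
    ∑ a, (∑ p, x p * h p a) * f a = ∑ p, x p * ∑ a, h p a * f a := by
  simp only [Finset.sum_mul, Finset.mul_sum]
  rw [Finset.sum_comm]
  simp only [mul_assoc]

lemma sum_sw (x y : Fin 7 → ℝ) (f : Fin 7 → Fin 7 → ℝ) :
    ∑ a, x a * ∑ b, y b * f a b = ∑ b, y b * ∑ a, x a * f a b := by
  simp only [Finset.mul_sum]
  rw [Finset.sum_comm]
  refine Finset.sum_congr rfl fun a _ => Finset.sum_congr rfl fun b _ => ?_
  ring

lemma pull_pull (h h' : Mat) (T : Ten) : pull h (pull h' T) = pull (mm h h') T := by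
  ext i j k
  simp only [pull, mm, sum_assoc]
  refine Finset.sum_congr rfl fun p _ => ?_
  congr 1
  have e1 : ∀ q, ∑ c, h k c * ∑ a, h' p a * ∑ b, h' q b * ∑ d, h' c d * T a b d
      = ∑ a, h' p a * ∑ b, h' q b * ∑ c, h k c * ∑ d, h' c d * T a b d := by
    intro q
    rw [sum_sw]
    refine Finset.sum_congr rfl fun a _ => ?_
    rw [sum_sw]
  simp only [e1]
  rw [sum_sw]

lemma pull_e (T : Ten) : pull e T = T := by
  ext i j k
  simp [pull, e]

lemma pull_alt (h : Mat) {T : Ten} (hT : IsAlt T) : IsAlt (pull h T) := by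
  intro i j k
  constructor
  · simp only [pull]
    rw [sum_sw, ← Finset.sum_neg_distrib]
    refine Finset.sum_congr rfl fun a _ => ?_
    rw [← mul_neg, ← Finset.sum_neg_distrib]
    congr 1
    refine Finset.sum_congr rfl fun b _ => ?_
    rw [← mul_neg, ← Finset.sum_neg_distrib]
    congr 1
    refine Finset.sum_congr rfl fun c _ => ?_
    rw [(hT a b c).1]; ring
  · simp only [pull]
    rw [← Finset.sum_neg_distrib]
    refine Finset.sum_congr rfl fun a _ => ?_
    rw [← mul_neg, sum_sw, ← Finset.sum_neg_distrib]
    congr 1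
    refine Finset.sum_congr rfl fun b _ => ?_
    rw [← mul_neg, ← Finset.sum_neg_distrib]
    congr 1
    refine Finset.sum_congr rfl fun c _ => ?_
    rw [(hT a b c).2]; ring

lemma pull_cont (h : Mat) : Continuous (pull h) := by
  unfold pull
  fun_prop

/-- antisymmetrization -/
def altL : Ten →ₗ[ℝ] Ten where
  toFun T := fun i j k =>
    (1 / 6 : ℝ) * (T i j k + T j k i + T k i j - T j i k - T i k j - T k j i)
  map_add' S T := by ext i j k; simp; ring
  map_smul' c T := by ext i j k; simp; ring

lemma altL_apply (T : Ten) (i j k : Fin 7) : altL T i j k =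
    (1 / 6 : ℝ) * (T i j k + T j k i + T k i j - T j i k - T i k j - T k j i) := rfl

lemma altL_alt (T : Ten) : IsAlt (altL T) := by
  intro i j k
  simp only [altL_apply]
  constructor <;> ring

lemma altL_of_alt {T : Ten} (hT : IsAlt T) : altL T = T := by
  ext i j k
  rw [altL_apply]
  have h1 := (hT i j k).1
  have h2 := (hT i j k).2
  have h3 := (hT j k i).2
  have h4 := (hT k i j).2
  have h5 := (hT j i k).2
  have h6 := (hT i k j).1
  linarith

/-- the derivative of `FF` at the identity -/
def DD (A : Mat) : Ten := fun i j k =>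
  phi (A i) (e j) (e k) + phi (e i) (A j) (e k) + phi (e i) (e j) (A k)

lemma DD_alt (A : Mat) : IsAlt (DD A) := by
  intro i j k
  simp only [DD]
  constructor
  · rw [phi_swap12 (e i) (A j), phi_swap12 (A i) (e j), phi_swap12 (e i) (e j)]; ring
  · rw [phi_swap23 (A i) (e j), phi_swap23 (e i) (e j), phi_swap23 (e i) (A j)]; ring

/-- a right inverse of `DD` on alternating tensors -/
def inv (T : Ten) : Mat :=
  ![![1/3 * T 0 1 2 + 1/3 * T 0 3 4 + 1/3 * T 0 5 6 - 1/6 * T 1 3 5 + 1/6 * T 1 4 6 + 1/6 * T 2 3 6 + 1/6 * T 2 4 5, 1/2 * T 0 3 5 - 1/2 * T 0 4 6 + 1/2 * T 1 3 4 - 1/2 * T 1 5 6, -1/2 * T 0 3 6 - 1/2 * T 0 4 5 + 1/2 * T 2 3 4 - 1/2 * T 2 5 6, -1/2 * T 0 1 5 + 1/2 * T 0 2 6 + 1/2 * T 1 2 3 - 1/2 * T 3 5 6, 1/2 * T 0 1 6 + 1/2 * T 0 2 5 + 1/2 * T 1 2 4 - 1/2 * T 4 5 6, 1/2 * T 0 1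 3 - 1/2 * T 0 2 4 + 1/2 * T 1 2 5 + 1/2 * T 3 4 5, -1/2 * T 0 1 4 - 1/2 * T 0 2 3 + 1/2 * T 1 2 6 + 1/2 * T 3 4 6],
    ![T 1 5 6, 1/3 * T 0 1 2 - 1/6 * T 0 3 4 - 1/6 * T 0 5 6 + 1/3 * T 1 3 5 - 1/3 * T 1 4 6 + 1/6 * T 2 3 6 + 1/6 * T 2 4 5, -1/2 * T 1 3 6 - 1/2 * T 1 4 5 + 1/2 * T 2 3 5 + 1/2 * T 2 4 6, 1/2 * T 0 1 4 - 1/2 * T 0 2 3 + 1/2 * T 1 2 6 + 1/2 * T 3 4 6, -1/2 * T 0 1 3 - 1/2 * T 0 2 4 + 1/2 * T 1 2 5 - 1/2 * T 3 4 5, 1/2 * T 0 1 6 - 1/2 * T 0 2 5 - 1/2 * T 1 2 4 + 1/2 * T 4 5 6, -1/2 * T 0 1 5 - 1/2 * T 0 2 6 - 1/2 * T 1 2 3 + 1/2 * T 3 5 6],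
    ![T 2 5 6, -T 2 4 6, 1/3 * T 0 1 2 - 1/6 * T 0 3 4 - 1/6 * T 0 5 6 - 1/6 * T 1 3 5 + 1/6 * T 1 4 6 - 1/3 * T 2 3 6 - 1/3 * T 2 4 5, 1/2 * T 0 1 3 + 1/2 * T 0 2 4 + 1/2 * T 1 2 5 + 1/2 * T 3 4 5, 1/2 * T 0 1 4 - 1/2 * T 0 2 3 - 1/2 * T 1 2 6 + 1/2 * T 3 4 6, 1/2 * T 0 1 5 + 1/2 * T 0 2 6 - 1/2 * T 1 2 3 + 1/2 * T 3 5 6, 1/2 * T 0 1 6 - 1/2 * T 0 2 5 + 1/2 * T 1 2 4 - 1/2 * T 4 5 6],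
    ![T 3 5 6, -T 3 4 6, -T 3 4 5, -1/6 * T 0 1 2 + 1/3 * T 0 3 4 - 1/6 * T 0 5 6 + 1/3 * T 1 3 5 + 1/6 * T 1 4 6 - 1/3 * T 2 3 6 + 1/6 * T 2 4 5, -1/2 * T 1 3 6 + 1/2 * T 1 4 5 - 1/2 * T 2 3 5 - 1/2 * T 2 4 6, 1/2 * T 0 3 6 - 1/2 * T 0 4 5 + 1/2 * T 2 3 4 - 1/2 * T 2 5 6, -1/2 * T 0 3 5 - 1/2 * T 0 4 6 + 1/2 * T 1 3 4 - 1/2 * T 1 5 6],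
    ![T 4 5 6, 0, 0, 0, -1/6 * T 0 1 2 + 1/3 * T 0 3 4 - 1/6 * T 0 5 6 - 1/6 * T 1 3 5 - 1/3 * T 1 4 6 + 1/6 * T 2 3 6 - 1/3 * T 2 4 5, 1/2 * T 0 3 5 + 1/2 * T 0 4 6 + 1/2 * T 1 3 4 - 1/2 * T 1 5 6, 1/2 * T 0 3 6 - 1/2 * T 0 4 5 - 1/2 * T 2 3 4 + 1/2 * T 2 5 6],
    ![0, 0, 0, 0, 0, -1/6 * T 0 1 2 - 1/6 * T 0 3 4 + 1/3 * T 0 5 6 + 1/3 * T 1 3 5 + 1/6 * T 1 4 6 + 1/6 * T 2 3 6 - 1/3 * T 2 4 5, 1/2 * T 1 3 6 - 1/2 * T 1 4 5 - 1/2 * T 2 3 5 - 1/2 * T 2 4 6],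
    ![0, 0, 0, 0, 0, 0, -1/6 * T 0 1 2 - 1/6 * T 0 3 4 + 1/3 * T 0 5 6 - 1/6 * T 1 3 5 - 1/3 * T 1 4 6 - 1/3 * T 2 3 6 + 1/6 * T 2 4 5]]

lemma alt_ext {S T : Ten} (hS : IsAlt S) (hT : IsAlt T)
    (h : ∀ i j k, i < j → j < k → S i j k = T i j k) : S = T := by
  have diag1 : ∀ {S : Ten}, IsAlt S → ∀ i k, S i i k = 0 := fun hS i k => by
    linarith [(hS i i k).1]
  have diag2 : ∀ {S : Ten}, IsAlt S → ∀ i k, S i k k = 0 := fun hS i k => by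
    linarith [(hS i k k).2]
  have A1 : ∀ i j k, i < j → S i j k = T i j k := by
    intro i j k hij
    rcases lt_trichotomy j k with hjk | rfl | hjk
    · exact h i j k hij hjk
    · rw [diag2 hS, diag2 hT]
    · rw [(hS i k j).2, (hT i k j).2, neg_inj]
      rcases lt_trichotomy i k with hik | rfl | hik
      · exact h i k j hik hjk
      · rw [diag1 hS, diag1 hT]
      · rw [(hS k i j).1, (hT k i j).1, h k i j hik hij]
  ext i j k
  rcases lt_trichotomy i j with hij | rfl | hij
  · exact A1 i j k hij
  · rw [diag1 hS, diag1 hT]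
  · rw [(hS j i k).1, (hT j i k).1, A1 j i k hij]

lemma fin7_cases (P : Fin 7 → Fin 7 → Fin 7 → Prop)
    (h : ∀ t ∈ ([(0,1,2),(0,1,3),(0,1,4),(0,1,5),(0,1,6),(0,2,3),(0,2,4),(0,2,5),(0,2,6),
      (0,3,4),(0,3,5),(0,3,6),(0,4,5),(0,4,6),(0,5,6),(1,2,3),(1,2,4),(1,2,5),(1,2,6),
      (1,3,4),(1,3,5),(1,3,6),(1,4,5),(1,4,6),(1,5,6),(2,3,4),(2,3,5),(2,3,6),(2,4,5),
      (2,4,6),(2,5,6),(3,4,5),(3,4,6),(3,5,6),(4,5,6)] : List (Fin 7 × Fin 7 × Fin 7)),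
      P t.1 t.2.1 t.2.2) :
    ∀ i j k, i < j → j < k → P i j k := by
  intro i j k hij hjk
  refine h (i, j, k) ?_
  revert i j k
  decide

set_option maxHeartbeats 4000000 in
lemma DD_inv {T : Ten} (hT : IsAlt T) : DD (inv T) = T := by
  refine alt_ext (DD_alt _) hT ?_
  apply fin7_cases
  simp only [List.forall_mem_cons]
  refine ⟨?_, ?_, ?_, ?_, ?_, ?_, ?_, ?_, ?_, ?_, ?_, ?_, ?_, ?_, ?_, ?_, ?_, ?_, ?_, ?_, ?_, ?_,
    ?_, ?_, ?_, ?_, ?_, ?_, ?_, ?_, ?_, ?_, ?_, ?_, ?_, by simp⟩ <;>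
  · simp [DD, inv, phi, w3, e]
    try ring

lemma FF_contDiff : ContDiff ℝ 1 FF := by
  unfold FF phi w3
  fun_prop

lemma FF_line (A : Mat) (t : ℝ) (i j k : Fin 7) : FF (e + t • A) i j k =
    FF e i j k + t * DD A i j k
      + t ^ 2 * (phi (A i) (A j) (e k) + phi (A i) (e j) (A k) + phi (e i) (A j) (A k))
      + t ^ 3 * FF A i j k := by
  simp only [FF, DD, phi, w3, Pi.add_apply, Pi.smul_apply, smul_eq_mul]
  ring

lemma FF_fderiv (A : Mat) : fderiv ℝ FF e A = DD A := by
  have h0 : HasFDerivAt FF (fderiv ℝ FF e) e :=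
    (FF_contDiff.differentiable (by norm_num) e).hasFDerivAt
  have h1 : HasDerivAt (fun t : ℝ => FF (e + t • A)) (fderiv ℝ FF e A) 0 := by
    have hl : HasDerivAt (fun t : ℝ => e + t • A) A 0 := by
      simpa using ((hasDerivAt_id (0 : ℝ)).smul_const A).const_add e
    have h0' : HasFDerivAt FF (fderiv ℝ FF e) (e + (0 : ℝ) • A) := by simpa using h0
    exact h0'.comp_hasDerivAt (0 : ℝ) hl
  ext i j k
  have h2 : HasDerivAt (fun t : ℝ => FF (e + t • A) i j k) (fderiv ℝ FF e A i j k) 0 := by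
    have := hasDerivAt_pi.1 h1 i
    have := hasDerivAt_pi.1 this j
    exact hasDerivAt_pi.1 this k
  simp only [FF_line] at h2
  refine h2.unique ?_
  have hid := hasDerivAt_id (0 : ℝ)
  have := (((hid.mul_const (DD A i j k)).const_add (FF e i j k)).add
    ((hid.pow 2).mul_const
      (phi (A i) (A j) (e k) + phi (A i) (e j) (A k) + phi (e i) (A j) (A k)))).add
    ((hid.pow 3).mul_const (FF A i j k))
  convert this using 1
  · rfl
  · simp

def altC : Ten →L[ℝ] Ten := LinearMap.toContinuousLinearMap altL

def GG (p : Mat × Ten) : Ten := FF p.1 + (p.2 - altC p.2)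

open Topology Filter in
lemma GG_nhds : map GG (𝓝 (e, 0)) = 𝓝 (FF e) := by
  have hF : HasStrictFDerivAt FF (fderiv ℝ FF e) e :=
    FF_contDiff.contDiffAt.hasStrictFDerivAt (by norm_num)
  have hF' : HasStrictFDerivAt (fun p : Mat × Ten => FF p.1)
      ((fderiv ℝ FF e).comp (ContinuousLinearMap.fst ℝ Mat Ten)) (e, 0) :=
    HasStrictFDerivAt.comp (e, (0 : Ten)) (g := FF) hF hasStrictFDerivAt_fst
  have hG : HasStrictFDerivAt GG
      ((fderiv ℝ FF e).comp (ContinuousLinearMap.fst ℝ Mat Ten)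
        + ((ContinuousLinearMap.id ℝ Ten - altC).comp (ContinuousLinearMap.snd ℝ Mat Ten)))
      (e, 0) :=
    hF'.add ((ContinuousLinearMap.id ℝ Ten - altC).comp
      (ContinuousLinearMap.snd ℝ Mat Ten)).hasStrictFDerivAt
  have := hG.map_nhds_eq_of_surj ?_
  · rw [this]
    simp [GG]
  · rw [LinearMap.range_eq_top]
    intro τ
    refine ⟨(inv (altL τ), τ), ?_⟩
    have h1 := DD_inv (altL_alt τ)
    have h2 : altC τ = altL τ := rfl
    simp [FF_fderiv, h1, h2]

def Inv (m : Mat) : Prop := (Matrix.of m).det ≠ 0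

open Topology Filter in
lemma orbit_nhds : ∀ᶠ T in 𝓝 (FF e), IsAlt T → ∃ m, Inv m ∧ T = FF m := by
  rw [← GG_nhds, eventually_map]
  have hc : Continuous fun p : Mat × Ten => (Matrix.of p.1).det :=
    Continuous.matrix_det (by exact continuous_fst)
  have h1 : (Matrix.of e).det ≠ 0 := by
    have : (Matrix.of e) = 1 := by
      ext i j; simp [e, Matrix.one_apply, eq_comm]
    rw [this]; simp
  filter_upwards [hc.continuousAt.eventually_ne h1] with p hp hT
  refine ⟨p.1, hp, ?_⟩
  have h2 := altL_of_alt hT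
  rw [← h2]
  have h3 : altC p.2 = altL p.2 := rfl
  simp only [GG, map_add, map_sub, h3]
  rw [altL_of_alt (FF_alt _), altL_of_alt (altL_alt _)]
  simp

lemma mm_eq (h h' : Mat) : Matrix.of (mm h h') = Matrix.of h * Matrix.of h' := by
  ext i j; simp [mm, Matrix.mul_apply]

lemma of_e : Matrix.of e = (1 : Matrix (Fin 7) (Fin 7) ℝ) := by
  ext i j; simp [e, Matrix.one_apply, eq_comm]

lemma exists_inv {m : Mat} (hm : Inv m) : ∃ n, mm m n = e ∧ mm n m = e := by
  have hu : IsUnit (Matrix.of m).det := isUnit_iff_ne_zero.2 hm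
  refine ⟨Matrix.of.symm (Matrix.of m)⁻¹, ?_, ?_⟩ <;> apply Matrix.of.injective <;>
    rw [mm_eq, of_e]
  · exact Matrix.mul_nonsing_inv _ hu
  · exact Matrix.nonsing_inv_mul _ hu

open Topology Filter in
lemma orbit_nhds' {m₀ : Mat} (h₀ : Inv m₀) :
    ∀ᶠ T in 𝓝 (FF m₀), IsAlt T → ∃ m, Inv m ∧ T = FF m := by
  obtain ⟨n, hmn, hnm⟩ := exists_inv h₀
  have hp : pull n (FF m₀) = FF e := by
    rw [FF_eq_pull m₀, pull_pull, hnm, pull_e]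
  have ht : Tendsto (pull n) (𝓝 (FF m₀)) (𝓝 (FF e)) := by
    rw [← hp]; exact (pull_cont n).tendsto _
  filter_upwards [ht.eventually orbit_nhds] with T hT hTa
  obtain ⟨m, hm, h⟩ := hT (pull_alt n hTa)
  refine ⟨mm m₀ m, ?_, ?_⟩
  · rw [Inv, mm_eq, Matrix.det_mul]
    exact mul_ne_zero h₀ hm
  · rw [FF_eq_pull, ← pull_pull, ← FF_eq_pull, ← h, pull_pull, hmn, pull_e]

lemma GL_form (T : Ten) : (∃ g : GL (Fin 7) ℝ, ∀ i j k : Fin 7,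
      T i j k = phi ((g : Matrix (Fin 7) (Fin 7) ℝ).mulVec (e i))
        ((g : Matrix (Fin 7) (Fin 7) ℝ).mulVec (e j))
        ((g : Matrix (Fin 7) (Fin 7) ℝ).mulVec (e k))) ↔ ∃ m, Inv m ∧ T = FF m := by
  have key : ∀ (M : Matrix (Fin 7) (Fin 7) ℝ) i, M.mulVec (e i) = Mᵀ i := by
    intro M i
    rw [e_eq]; ext a; simp [Matrix.mulVec_single, Matrix.transpose_apply]
  simp only [key]
  constructor
  · rintro ⟨g, hg⟩
    refine ⟨fun i => (g : Matrix (Fin 7) (Fin 7) ℝ)ᵀ i, ?_, by ext i j k; exact hg i j k⟩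
    change ((g : Matrix (Fin 7) (Fin 7) ℝ)ᵀ).det ≠ 0
    rw [Matrix.det_transpose]
    exact ((Matrix.isUnit_iff_isUnit_det _).1 g.isUnit).ne_zero
  · rintro ⟨m, hm, rfl⟩
    refine ⟨Matrix.GeneralLinearGroup.mkOfDetNeZero (Matrix.of m)ᵀ
      (by rw [Matrix.det_transpose]; exact hm), fun i j k => rfl⟩

/-- the `GL(7,ℝ)`-orbit of `φ`, i.e. the set of pullbacks `g*φ` for
`g ∈ GL(7,ℝ)` (here described by coefficient tensors `(g*φ)_{ijk} = φ(g e_i, g e_j, g e_k)`),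
is an open subset of the space of alternating 3-forms on `ℝ⁷`. -/
theorem orbit_of_phi_isOpen :
    IsOpen {T : Alt3 | ∃ g : GL (Fin 7) ℝ, ∀ i j k : Fin 7,
      T.1 i j k = phi ((g : Matrix (Fin 7) (Fin 7) ℝ).mulVec (e i))
        ((g : Matrix (Fin 7) (Fin 7) ℝ).mulVec (e j))
        ((g : Matrix (Fin 7) (Fin 7) ℝ).mulVec (e k))} := by
  rw [isOpen_iff_mem_nhds]
  intro T₀ h
  obtain ⟨m₀, hm₀, h₀⟩ := (GL_form T₀.1).1 h
  have h1 := orbit_nhds' hm₀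
  rw [← h₀] at h1
  have hc : Continuous (fun T : Alt3 => T.1) := continuous_subtype_val
  have h2 := hc.continuousAt.eventually h1
  filter_upwards [h2] with T hT
  exact (GL_form T.1).2 (hT T.2)


end G2

end
end

section
/- If g ∈ GL(7,ℝ) satisfies g*φ = φ, then g is a special orthogonal transformation, i.e. gᵀg = I and det g = 1; moreover g also fixes the 4-form ψ, i.e. g*ψ = ψ. (Thus the stabilizer G₂ of φ is contained in SO(7) and preserves the metric, orientation, and Hodge dual 4-form associated to φ.) -/
open scoped BigOperators Matrix

noncomputable section

namespace G2

/-- The skew matrix of the 2-form `φ(x,·,·)`. -/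
def Am (x : Fin 7 → ℝ) : Matrix (Fin 7) (Fin 7) ℝ :=
  !![0, x 2, -x 1, x 4, -x 3, x 6, -x 5;
     -x 2, 0, x 0, x 5, -x 6, -x 3, x 4;
     x 1, -x 0, 0, -x 6, -x 5, x 4, x 3;
     -x 4, -x 5, x 6, 0, x 0, x 1, -x 2;
     x 3, x 6, x 5, -x 0, 0, -x 2, -x 1;
     -x 6, x 3, -x 4, -x 1, x 2, 0, x 0;
     x 5, -x 4, -x 3, x 2, x 1, -x 0, 0]

theorem phi_eq (x y z : Fin 7 → ℝ) : phi x y z = y ⬝ᵥ (Am x *ᵥ z) := by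
  simp only [phi, w3, Am, dotProduct, Matrix.mulVec, Fin.sum_univ_seven]
  simp
  ring

theorem phi_eq' (x y z : Fin 7 → ℝ) : phi x y z = (Am x *ᵥ (-y)) ⬝ᵥ z := by
  simp only [phi, w3, Am, dotProduct, Matrix.mulVec, Fin.sum_univ_seven]
  simp
  ring

theorem Am_sq (x : Fin 7 → ℝ) :
    Am x * Am x = -((x ⬝ᵥ x) • (1 : Matrix (Fin 7) (Fin 7) ℝ)) + Matrix.vecMulVec x x := by
  ext i j
  simp only [Matrix.mul_apply, Matrix.add_apply, Matrix.neg_apply, Matrix.smul_apply,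
    Matrix.vecMulVec_apply, dotProduct, Fin.sum_univ_seven, Matrix.one_apply]
  fin_cases i <;> fin_cases j <;> simp [Am] <;> ring

theorem Am_transpose (x : Fin 7 → ℝ) : (Am x)ᵀ = -Am x := by
  ext i j
  fin_cases i <;> fin_cases j <;> simp [Am]

theorem Am_self (x : Fin 7 → ℝ) : Am x *ᵥ x = 0 := by
  ext i
  simp only [Matrix.mulVec, dotProduct, Fin.sum_univ_seven]
  fin_cases i <;> simp [Am] <;> ring

theorem self_Am (x : Fin 7 → ℝ) : x ᵥ* Am x = 0 := by
  have := Am_transpose x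
  rw [← Matrix.mulVec_transpose, this, Matrix.neg_mulVec, Am_self, neg_zero]

/-- cross product -/
def cr (x y : Fin 7 → ℝ) : Fin 7 → ℝ := Am x *ᵥ (-y)

theorem w4_eq (a b c d : Fin 7) (x y z w : Fin 7 → ℝ) :
    w4 a b c d x y z w =
      x a * w3 b c d y z w - x b * w3 a c d y z w + x c * w3 a b d y z w - x d * w3 a b c y z w := by
  simp only [w4, w3, Matrix.det_succ_row_zero (n := 3), Fin.sum_univ_four, Matrix.det_fin_three]
  simp [Fin.succAbove]
  ring

theorem cr_eq (x y : Fin 7 → ℝ) : cr x y =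
    ![x 1 * y 2 - x 2 * y 1 + x 3 * y 4 - x 4 * y 3 + x 5 * y 6 - x 6 * y 5,
      x 2 * y 0 - x 0 * y 2 + x 3 * y 5 - x 5 * y 3 - x 4 * y 6 + x 6 * y 4,
      x 0 * y 1 - x 1 * y 0 - x 3 * y 6 + x 6 * y 3 - x 4 * y 5 + x 5 * y 4,
      x 4 * y 0 - x 0 * y 4 + x 5 * y 1 - x 1 * y 5 - x 6 * y 2 + x 2 * y 6,
      x 0 * y 3 - x 3 * y 0 - x 6 * y 1 + x 1 * y 6 - x 5 * y 2 + x 2 * y 5,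
      x 6 * y 0 - x 0 * y 6 + x 1 * y 3 - x 3 * y 1 - x 2 * y 4 + x 4 * y 2,
      x 0 * y 5 - x 5 * y 0 - x 1 * y 4 + x 4 * y 1 - x 2 * y 3 + x 3 * y 2] := by
  ext i
  simp only [cr, Am, Matrix.mulVec, dotProduct, Fin.sum_univ_seven]
  fin_cases i <;> simp <;> ring

set_option maxRecDepth 100000 in
set_option maxHeartbeats 4000000 in
theorem psi_eq (x y z w : Fin 7 → ℝ) :
    psi x y z w = cr x y ⬝ᵥ cr z w - (x ⬝ᵥ z) * (y ⬝ᵥ w) + (x ⬝ᵥ w) * (y ⬝ᵥ z) := by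
  simp only [psi, w4_eq, w3, cr_eq, dotProduct, Fin.sum_univ_seven, Matrix.cons_val]
  ring

theorem det_one_add_vv (u v : Fin 7 → ℝ) :
    (1 + Matrix.vecMulVec u v).det = 1 + v ⬝ᵥ u := by
  rw [Matrix.vecMulVec_eq (Fin 1), Matrix.det_one_add_replicateCol_mul_replicateRow]

theorem det_AX (x : Fin 7 → ℝ) (hx : x ⬝ᵥ x ≠ 0) :
    (Am x + Matrix.vecMulVec x x).det ^ 2 = (x ⬝ᵥ x) ^ 8 := by
  set q := x ⬝ᵥ x with hq
  have h1 : (Am x + Matrix.vecMulVec x x) * (Am x + Matrix.vecMulVec x x)ᵀ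
      = q • (1 + Matrix.vecMulVec (((q - 1) / q) • x) x) := by
    rw [Matrix.transpose_add, Am_transpose, Matrix.transpose_vecMulVec, add_mul, mul_add, mul_add,
      mul_neg, mul_neg, Am_sq, Matrix.mul_vecMulVec, Am_self, Matrix.vecMulVec_mul, self_Am,
      Matrix.vecMulVec_mul_vecMulVec, ← hq, Matrix.smul_vecMulVec]
    ext i j
    simp [Matrix.vecMulVec_apply]
    field_simp
    ring
  have h2 := congrArg Matrix.det h1
  rw [Matrix.det_mul, Matrix.det_transpose, Matrix.det_smul, det_one_add_vv,
    dotProduct_smul, ← hq, Fintype.card_fin, smul_eq_mul] at h2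
  rw [sq, h2]
  field_simp
  ring

theorem det_AXi (x u : Fin 7 → ℝ) (hx : x ⬝ᵥ x ≠ 0) :
    (Am x + Matrix.vecMulVec u u).det ^ 2 = (x ⬝ᵥ x) ^ 4 * (x ⬝ᵥ u) ^ 4 := by
  set q := x ⬝ᵥ x with hq
  set v := (1 / q) • (u - x) with hv
  have h3 : u = x + q • v := by
    rw [hv, smul_smul, mul_one_div_cancel hx, one_smul]; abel
  have h1 : Am x + Matrix.vecMulVec u u =
      (1 + Matrix.vecMulVec v x) * (Am x + Matrix.vecMulVec x x) * (1 + Matrix.vecMulVec x v) := by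
    have : (1 + Matrix.vecMulVec v x) * (Am x + Matrix.vecMulVec x x)
        = Am x + Matrix.vecMulVec u x := by
      rw [add_mul, one_mul, mul_add, Matrix.vecMulVec_mul, self_Am, Matrix.vecMulVec_mul_vecMulVec,
        ← hq, h3]
      ext i j
      simp [Matrix.vecMulVec_apply]
      ring
    rw [this, mul_add, mul_one, add_mul, Matrix.mul_vecMulVec, Am_self,
      Matrix.vecMulVec_mul_vecMulVec, ← hq]
    nth_rewrite 2 [h3]
    ext i j
    simp [Matrix.vecMulVec_apply]
    ring
  have h4 : x ⬝ᵥ u = q * (1 + x ⬝ᵥ v) := by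
    rw [h3, dotProduct_add, dotProduct_smul, ← hq, smul_eq_mul]; ring
  rw [h1, Matrix.det_mul, Matrix.det_mul, det_one_add_vv, det_one_add_vv, mul_pow, mul_pow,
    det_AX x hx, h4, dotProduct_comm v x, ← hq]
  ring

theorem conj_Am (M : Matrix (Fin 7) (Fin 7) ℝ)
    (hg : ∀ x y z, phi (M *ᵥ x) (M *ᵥ y) (M *ᵥ z) = phi x y z) (x : Fin 7 → ℝ) :
    Mᵀ * Am (M *ᵥ x) * M = Am x := by
  apply Matrix.toBilin'.injective
  refine LinearMap.ext fun y => LinearMap.ext fun z => ?_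
  have := hg x y z
  rw [phi_eq, phi_eq] at this
  rw [Matrix.toBilin'_apply', Matrix.toBilin'_apply', ← this, ← Matrix.mulVec_mulVec,
    ← Matrix.mulVec_mulVec, Matrix.dotProduct_mulVec, Matrix.vecMul_transpose]

theorem norm_rel (M : Matrix (Fin 7) (Fin 7) ℝ) (hM : M.det ≠ 0)
    (hg : ∀ x y z, phi (M *ᵥ x) (M *ᵥ y) (M *ᵥ z) = phi x y z) (x : Fin 7 → ℝ) :
    M.det ^ 2 * (M *ᵥ x ⬝ᵥ M *ᵥ x) ^ 2 = (x ⬝ᵥ x) ^ 2 := by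
  by_cases hx : x = 0
  · simp [hx]
  have hx' : x ⬝ᵥ x ≠ 0 := fun h => hx (dotProduct_self_eq_zero.1 h)
  have hgx : (M *ᵥ x ⬝ᵥ M *ᵥ x) ≠ 0 := fun h =>
    hx (Matrix.eq_zero_of_mulVec_eq_zero hM (dotProduct_self_eq_zero.1 h))
  have h1 : Mᵀ * (Am (M *ᵥ x) + Matrix.vecMulVec (M *ᵥ x) (M *ᵥ x)) * M =
      Am x + Matrix.vecMulVec (Mᵀ *ᵥ (M *ᵥ x)) (Mᵀ *ᵥ (M *ᵥ x)) := by
    rw [mul_add, add_mul, conj_Am M hg, Matrix.mul_vecMulVec, Matrix.vecMulVec_mul,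
      Matrix.mulVec_transpose M]
  have h2 := congrArg (fun A => Matrix.det A ^ 2) h1
  simp only [Matrix.det_mul, Matrix.det_transpose, mul_pow] at h2
  rw [det_AX _ hgx, det_AXi _ _ hx', Matrix.dotProduct_mulVec x, Matrix.vecMul_transpose] at h2
  have h3 : (M.det ^ 2 * (M *ᵥ x ⬝ᵥ M *ᵥ x) ^ 2) ^ 2 = ((x ⬝ᵥ x) ^ 2) ^ 2 := by
    apply mul_right_cancel₀ (pow_ne_zero 4 hgx)
    linear_combination h2
  exact (pow_left_inj₀ (by positivity) (by positivity) two_ne_zero).1 h3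

theorem orth (M : Matrix (Fin 7) (Fin 7) ℝ) (hM : M.det ≠ 0)
    (hg : ∀ x y z, phi (M *ᵥ x) (M *ᵥ y) (M *ᵥ z) = phi x y z) : Mᵀ * M = 1 := by
  set c := 1 / |M.det| with hc
  have hd : 0 < |M.det| := abs_pos.2 hM
  have h1 : ∀ x, M *ᵥ x ⬝ᵥ M *ᵥ x = c * (x ⬝ᵥ x) := by
    intro x
    have h := norm_rel M hM hg x
    have hp : 0 ≤ M *ᵥ x ⬝ᵥ M *ᵥ x := Finset.sum_nonneg fun i _ => mul_self_nonneg _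
    have hp' : 0 ≤ x ⬝ᵥ x := Finset.sum_nonneg fun i _ => mul_self_nonneg _
    rw [← sq_abs M.det, ← mul_pow] at h
    have := (pow_left_inj₀ (by positivity) hp' two_ne_zero).1 h
    rw [hc, ← this]
    field_simp
  have h2 : ∀ x y, M *ᵥ x ⬝ᵥ M *ᵥ y = c * (x ⬝ᵥ y) := by
    intro x y
    have h := h1 (x + y)
    simp only [Matrix.mulVec_add, add_dotProduct, dotProduct_add] at h
    rw [h1 x, h1 y, dotProduct_comm (M *ᵥ y), dotProduct_comm y x] at h
    linarith
  have h3 : Mᵀ * M = c • (1 : Matrix (Fin 7) (Fin 7) ℝ) := by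
    apply Matrix.toBilin'.injective
    refine LinearMap.ext fun y => LinearMap.ext fun z => ?_
    rw [Matrix.toBilin'_apply', Matrix.toBilin'_apply', ← Matrix.mulVec_mulVec,
      Matrix.dotProduct_mulVec, Matrix.vecMul_transpose, h2, Matrix.smul_mulVec,
      Matrix.one_mulVec, dotProduct_smul, smul_eq_mul]
  have h4 := congrArg Matrix.det h3
  rw [Matrix.det_mul, Matrix.det_transpose, Matrix.det_smul, Matrix.det_one, Fintype.card_fin,
    mul_one] at h4
  have hcp : 0 < c := by positivity
  have h5 : c * |M.det| = 1 := by rw [hc]; field_simp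
  have h6 : c ^ 9 = 1 := by
    have : |M.det| ^ 2 = c ^ 7 := by rw [sq_abs, sq, h4]
    calc c ^ 9 = c ^ 2 * c ^ 7 := by ring
      _ = (c * |M.det|) ^ 2 := by rw [← this]; ring
      _ = 1 := by rw [h5]; ring
  have h7 : c = 1 := (pow_eq_one_iff_of_nonneg hcp.le (by norm_num)).1 h6
  rw [h3, h7, one_smul]

theorem cr_inv (M : Matrix (Fin 7) (Fin 7) ℝ) (ho : Mᵀ * M = 1)
    (hg : ∀ x y z, phi (M *ᵥ x) (M *ᵥ y) (M *ᵥ z) = phi x y z) (x y : Fin 7 → ℝ) :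
    cr (M *ᵥ x) (M *ᵥ y) = M *ᵥ cr x y := by
  have h : Mᵀ *ᵥ cr (M *ᵥ x) (M *ᵥ y) = cr x y := by
    apply dotProduct_eq
    intro z
    have := hg x y z
    rw [phi_eq', phi_eq'] at this
    rw [Matrix.mulVec_transpose, ← Matrix.dotProduct_mulVec]
    exact this
  rw [← h, Matrix.mulVec_mulVec, mul_eq_one_comm.1 ho, Matrix.one_mulVec]

theorem psi_inv (M : Matrix (Fin 7) (Fin 7) ℝ) (ho : Mᵀ * M = 1)
    (hg : ∀ x y z, phi (M *ᵥ x) (M *ᵥ y) (M *ᵥ z) = phi x y z) (x y z w : Fin 7 → ℝ) :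
    psi (M *ᵥ x) (M *ᵥ y) (M *ᵥ z) (M *ᵥ w) = psi x y z w := by
  have h : ∀ a b, M *ᵥ a ⬝ᵥ M *ᵥ b = a ⬝ᵥ b := by
    intro a b
    rw [Matrix.dotProduct_mulVec, ← Matrix.mulVec_transpose, Matrix.mulVec_mulVec, ho,
      Matrix.one_mulVec]
  rw [psi_eq, psi_eq, cr_inv M ho hg, cr_inv M ho hg]
  simp only [h]

theorem jacobi (h : Matrix (Fin 3 ⊕ Fin 4) (Fin 3 ⊕ Fin 4) ℝ) (hh : h * hᵀ = 1) :
    h.toBlocks₁₁.det = h.det * h.toBlocks₂₂.det := by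
  obtain ⟨A, B, C, D, rfl⟩ : ∃ A B C D, h = Matrix.fromBlocks A B C D :=
    ⟨_, _, _, _, (Matrix.fromBlocks_toBlocks h).symm⟩
  rw [Matrix.fromBlocks_transpose, Matrix.fromBlocks_multiply, ← Matrix.fromBlocks_one,
    Matrix.fromBlocks_inj] at hh
  have h1 : Matrix.fromBlocks A B C D * Matrix.fromBlocks 1 Cᵀ 0 Dᵀ
      = Matrix.fromBlocks A 0 C 1 := by
    rw [Matrix.fromBlocks_multiply, hh.2.1, hh.2.2.2]
    simp
  have h2 := congrArg Matrix.det h1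
  rw [Matrix.det_mul, Matrix.det_fromBlocks_zero₂₁, Matrix.det_fromBlocks_zero₁₂] at h2
  simpa using h2.symm

theorem minor (M : Matrix (Fin 7) (Fin 7) ℝ) (ho : M * Mᵀ = 1) (p : Equiv.Perm (Fin 7))
    (hp : Equiv.Perm.sign p = 1) :
    w3 (p 0) (p 1) (p 2) (M.col 0) (M.col 1) (M.col 2) =
      M.det * w4 (p 3) (p 4) (p 5) (p 6) (M.col 3) (M.col 4) (M.col 5) (M.col 6) := by
  let f : Fin 3 ⊕ Fin 4 ≃ Fin 7 := finSumFinEquiv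
  have hN : (M.submatrix p id) * (M.submatrix p id)ᵀ = 1 := by
    rw [Matrix.transpose_submatrix, ← Matrix.submatrix_mul M Mᵀ p id p Function.bijective_id, ho]
    simp
  have h := jacobi ((M.submatrix p id).submatrix f f) (by
    rw [Matrix.transpose_submatrix, Matrix.submatrix_mul_equiv, hN]; simp)
  rw [Matrix.det_submatrix_equiv_self, Matrix.det_permute, hp] at h
  have h1 : w3 (p 0) (p 1) (p 2) (M.col 0) (M.col 1) (M.col 2) =
      ((M.submatrix p id).submatrix f f).toBlocks₁₁.det := by
    rw [Matrix.det_fin_three]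
    change _ = M (p 0) 0 * M (p 1) 1 * M (p 2) 2 - M (p 0) 0 * M (p 1) 2 * M (p 2) 1
      - M (p 0) 1 * M (p 1) 0 * M (p 2) 2 + M (p 0) 1 * M (p 1) 2 * M (p 2) 0
      + M (p 0) 2 * M (p 1) 0 * M (p 2) 1 - M (p 0) 2 * M (p 1) 1 * M (p 2) 0
    simp only [w3, Matrix.col_apply]
    ring
  have h2 : w4 (p 3) (p 4) (p 5) (p 6) (M.col 3) (M.col 4) (M.col 5) (M.col 6) =
      ((M.submatrix p id).submatrix f f).toBlocks₂₂.det := by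
    rw [← Matrix.det_transpose, w4]
    congr 1
    ext i j
    fin_cases i <;> fin_cases j <;> rfl
  rw [h1, h2, h]
  simp

theorem det_one (M : Matrix (Fin 7) (Fin 7) ℝ) (ho : Mᵀ * M = 1)
    (hg : ∀ x y z, phi (M *ᵥ x) (M *ᵥ y) (M *ᵥ z) = phi x y z) : M.det = 1 := by
  have ho' := mul_eq_one_comm.1 ho
  have h0 := minor M ho' ⟨![0, 1, 2, 3, 4, 5, 6], ![0, 1, 2, 3, 4, 5, 6], by decide, by decide⟩ (by decide)
  have h1 := minor M ho' ⟨![0, 3, 4, 1, 2, 5, 6], ![0, 3, 4, 1, 2, 5, 6], by decide, by decide⟩ (by decide)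
  have h2 := minor M ho' ⟨![0, 5, 6, 1, 2, 3, 4], ![0, 3, 4, 5, 6, 1, 2], by decide, by decide⟩ (by decide)
  have h3 := minor M ho' ⟨![1, 3, 5, 0, 2, 4, 6], ![3, 0, 4, 1, 5, 2, 6], by decide, by decide⟩ (by decide)
  have h4 := minor M ho' ⟨![1, 4, 6, 0, 2, 3, 5], ![3, 0, 4, 5, 1, 6, 2], by decide, by decide⟩ (by decide)
  have h5 := minor M ho' ⟨![2, 3, 6, 0, 1, 4, 5], ![3, 4, 0, 1, 5, 6, 2], by decide, by decide⟩ (by decide)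
  have h6 := minor M ho' ⟨![2, 4, 5, 0, 1, 3, 6], ![3, 4, 0, 5, 1, 2, 6], by decide, by decide⟩ (by decide)
  have hphi := hg (Pi.single 0 1) (Pi.single 1 1) (Pi.single 2 1)
  have hpsi := psi_inv M ho hg (Pi.single 3 1) (Pi.single 4 1) (Pi.single 5 1) (Pi.single 6 1)
  simp only [Matrix.mulVec_single_one] at hphi hpsi
  have e1 : phi (Pi.single 0 1) (Pi.single 1 1) (Pi.single 2 1) = 1 := by
    simp [phi, w3, Pi.single_apply]
  have e2 : psi (Pi.single 3 1) (Pi.single 4 1) (Pi.single 5 1) (Pi.single 6 1) = 1 := by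
    simp [psi, w4_eq, w3, Pi.single_apply]
  rw [e1, phi] at hphi
  rw [e2, psi] at hpsi
  simp at h0 h1 h2 h3 h4 h5 h6
  rw [h0, h1, h2, h3, h4, h5, h6] at hphi
  linear_combination hphi - M.det * hpsi

/-- if `g ∈ GL(7,ℝ)` fixes `φ` (i.e. `g*φ = φ`), then `gᵀg = 1`, `det g = 1`,
and `g` also fixes the 4-form `ψ` (i.e. `g*ψ = ψ`). -/
theorem stabilizer_in_SO7 (g : GL (Fin 7) ℝ)
    (hg : ∀ x y z : Fin 7 → ℝ,
      phi ((g : Matrix (Fin 7) (Fin 7) ℝ).mulVec x)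
          ((g : Matrix (Fin 7) (Fin 7) ℝ).mulVec y)
          ((g : Matrix (Fin 7) (Fin 7) ℝ).mulVec z) = phi x y z) :
    (g : Matrix (Fin 7) (Fin 7) ℝ)ᵀ * (g : Matrix (Fin 7) (Fin 7) ℝ) = 1 ∧
    (g : Matrix (Fin 7) (Fin 7) ℝ).det = 1 ∧
    (∀ x y z w : Fin 7 → ℝ,
      psi ((g : Matrix (Fin 7) (Fin 7) ℝ).mulVec x)
          ((g : Matrix (Fin 7) (Fin 7) ℝ).mulVec y)
          ((g : Matrix (Fin 7) (Fin 7) ℝ).mulVec z)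
          ((g : Matrix (Fin 7) (Fin 7) ℝ).mulVec w) = psi x y z w) := by
  have hM : (g : Matrix (Fin 7) (Fin 7) ℝ).det ≠ 0 :=
    ((Matrix.isUnit_iff_isUnit_det _).1 g.isUnit).ne_zero
  have ho := orth _ hM hg
  exact ⟨ho, det_one _ ho hg, psi_inv _ ho hg⟩

end G2

end
end

section
/- The bilinear map × is a vector cross product compatible with the standard inner product: for all u, v ∈ ℝ⁷ one has ⟨u×v, u⟩ = 0, ⟨u×v, v⟩ = 0, and |u×v|² = |u|²|v|² − ⟨u,v⟩². -/
open scoped BigOperators Matrix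

noncomputable section

namespace G2

/-- The vector cross product on `ℝ⁷` defined by `⟨u × v, w⟩ = φ(u,v,w)`, i.e.
`(u × v)ᵢ = φ(u, v, eᵢ)`. -/
def cross (u v : Fin 7 → ℝ) : Fin 7 → ℝ := fun i => phi u v (e i)

/-- `×` is a vector cross product compatible with the standard inner product:
`⟨u×v, u⟩ = 0`, `⟨u×v, v⟩ = 0`, and `|u×v|² = |u|²|v|² − ⟨u,v⟩²`. -/
theorem cross_is_vector_cross_product (u v : Fin 7 → ℝ) :
    (∑ i : Fin 7, cross u v i * u i = 0) ∧
    (∑ i : Fin 7, cross u v i * v i = 0) ∧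
    (∑ i : Fin 7, cross u v i * cross u v i
      = (∑ i : Fin 7, u i * u i) * (∑ i : Fin 7, v i * v i)
        - (∑ i : Fin 7, u i * v i) ^ 2) := by
  have h0 : cross u v 0 = u 1 * v 2 - u 2 * v 1 + (u 3 * v 4 - u 4 * v 3)
      + (u 5 * v 6 - u 6 * v 5) := by simp [cross, phi, w3, e]; ring
  have h1 : cross u v 1 = u 2 * v 0 - u 0 * v 2 + (u 3 * v 5 - u 5 * v 3)
      - (u 4 * v 6 - u 6 * v 4) := by simp [cross, phi, w3, e]; ring
  have h2 : cross u v 2 = u 0 * v 1 - u 1 * v 0 - (u 3 * v 6 - u 6 * v 3)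
      - (u 4 * v 5 - u 5 * v 4) := by simp [cross, phi, w3, e]; ring
  have h3 : cross u v 3 = u 4 * v 0 - u 0 * v 4 + (u 5 * v 1 - u 1 * v 5)
      - (u 6 * v 2 - u 2 * v 6) := by simp [cross, phi, w3, e]; ring
  have h4 : cross u v 4 = u 0 * v 3 - u 3 * v 0 - (u 6 * v 1 - u 1 * v 6)
      - (u 5 * v 2 - u 2 * v 5) := by simp [cross, phi, w3, e]; ring
  have h5 : cross u v 5 = u 6 * v 0 - u 0 * v 6 + (u 1 * v 3 - u 3 * v 1)
      - (u 2 * v 4 - u 4 * v 2) := by simp [cross, phi, w3, e]; ring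
  have h6 : cross u v 6 = u 0 * v 5 - u 5 * v 0 - (u 1 * v 4 - u 4 * v 1)
      - (u 2 * v 3 - u 3 * v 2) := by simp [cross, phi, w3, e]
  simp only [Fin.sum_univ_seven, h0, h1, h2, h3, h4, h5, h6]
  refine ⟨by ring, by ring, by ring⟩

end G2

end
end
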